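/- Let λ₁ ∈ ℂ and η = (η₁,η₂) ∈ ℂ² with d := d_{λ₁}(η,η) ≠ 0, and define η⁽¹⁾ := (conj(η₂)/d, conj(η₁)/conj(d)). Then d_{λ₁}(η⁽¹⁾,η⁽¹⁾) ≠ 0, and for every u ∈ ℂ one has B_{λ₁}(η⁽¹⁾)(B_{λ₁}(η)u) = u; that is, B_{λ₁}(η⁽¹⁾) is a left inverse of the Bäcklund transformation B_{λ₁}(η). -/

import Mathlib

/-!
Write `d = d_λ(η,η)` and `η' = (conj η₂ / d, conj η₁ / conj d)`. Since `|η'₁|² = |η₂|² / (d conj d)`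
and `|η'₂|² = |η₁|² / (d conj d)`, one gets `d_λ(η',η') = conj d / (d conj d) = 1 / d`. Hence
`G_λ(η') = d / conj d = G_λ(η)⁻¹`, and `S_λ(η') = S_λ(η)`; so with `G = G_λ(η)`, `S = S_λ(η)`,
`B_λ(η')(B_λ(η)u) = G⁻¹ (-G⁻¹ (G (-G u + S)) + S) = u`.
-/

open Complex

/-- The bilinear form `d_λ(η,η) := λ|η₁|² + conj(λ)|η₂|²`. -/
noncomputable def dForm (l : ℂ) (η : ℂ × ℂ) : ℂ :=
  l * (‖η.1‖ : ℂ) ^ 2 + (starRingEnd ℂ l) * (‖η.2‖ : ℂ) ^ 2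

/-- `G_λ(η) := d_{conj(λ)}(η,η)/d_λ(η,η)`. -/
noncomputable def Gop (l : ℂ) (η : ℂ × ℂ) : ℂ :=
  dForm (starRingEnd ℂ l) η / dForm l η

/-- `S_λ(η) := 2i(λ² − conj(λ)²)η₁conj(η₂)/d_λ(η,η)`. -/
noncomputable def Sop (l : ℂ) (η : ℂ × ℂ) : ℂ :=
  2 * Complex.I * (l ^ 2 - (starRingEnd ℂ l) ^ 2) * η.1 * (starRingEnd ℂ η.2) / dForm l η

/-- The Bäcklund transformation `B_λ(η)u := G_λ(η)(−G_λ(η)u + S_λ(η))`. -/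
noncomputable def Bop (l : ℂ) (η : ℂ × ℂ) (u : ℂ) : ℂ :=
  Gop l η * (-(Gop l η) * u + Sop l η)

lemma dForm_conj (l : ℂ) (η : ℂ × ℂ) :
    dForm (starRingEnd ℂ l) η = starRingEnd ℂ (dForm l η) := by
  simp [dForm]

lemma dForm_inverse (l : ℂ) (η : ℂ × ℂ) (hd : dForm l η ≠ 0) :
    dForm l (starRingEnd ℂ η.2 / dForm l η,
      starRingEnd ℂ η.1 / starRingEnd ℂ (dForm l η)) = (dForm l η)⁻¹ := by
  have hc : starRingEnd ℂ (dForm l η) ≠ 0 := by simpa using hd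
  have key : l * (‖η.2‖ : ℂ) ^ 2 + starRingEnd ℂ l * (‖η.1‖ : ℂ) ^ 2
      = starRingEnd ℂ (dForm l η) := by
    simp [dForm, add_comm]
  have hn : (‖dForm l η‖ : ℂ) ^ 2 = dForm l η * starRingEnd ℂ (dForm l η) :=
    (Complex.mul_conj' _).symm
  generalize dForm l η = d at *
  simp only [dForm, norm_div, RCLike.norm_conj, Complex.ofReal_div, div_pow, hn]
  rw [← mul_div_assoc, ← mul_div_assoc, ← add_div, key]
  field_simp

lemma Sop_inverse (l : ℂ) (η : ℂ × ℂ) (hd : dForm l η ≠ 0) :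
    Sop l (starRingEnd ℂ η.2 / dForm l η,
      starRingEnd ℂ η.1 / starRingEnd ℂ (dForm l η)) = Sop l η := by
  simp only [Sop, dForm_inverse l η hd, map_div₀, Complex.conj_conj]
  field_simp

lemma Gop_inverse (l : ℂ) (η : ℂ × ℂ) (hd : dForm l η ≠ 0) :
    Gop l (starRingEnd ℂ η.2 / dForm l η,
      starRingEnd ℂ η.1 / starRingEnd ℂ (dForm l η)) = (Gop l η)⁻¹ := by
  simp only [Gop, dForm_conj, dForm_inverse l η hd, map_inv₀, inv_div, div_inv_eq_mul]
  rw [mul_comm, div_eq_mul_inv]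

theorem backlund_left_inverse (l1 : ℂ) (η : ℂ × ℂ) (hd : dForm l1 η ≠ 0) :
    dForm l1 (starRingEnd ℂ η.2 / dForm l1 η,
        starRingEnd ℂ η.1 / starRingEnd ℂ (dForm l1 η)) ≠ 0 ∧
    ∀ u : ℂ,
      Bop l1 (starRingEnd ℂ η.2 / dForm l1 η,
        starRingEnd ℂ η.1 / starRingEnd ℂ (dForm l1 η)) (Bop l1 η u) = u := by
  refine ⟨by rw [dForm_inverse l1 η hd]; exact inv_ne_zero hd, fun u => ?_⟩
  have hG : Gop l1 η ≠ 0 := by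
    rw [Gop, dForm_conj]
    exact div_ne_zero (by simpa using hd) hd
  simp only [Bop, Gop_inverse l1 η hd, Sop_inverse l1 η hd]
  field_simp
  ring
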